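/- arXiv:0910.4928 — 7 statements merged into one kernel-verified Lean document; each statement's English description precedes it below -/
import Mathlib

section
/- Let $K$ be a field and let $L_1,\dots,L_s$ be distinct lines in the projective plane $\mathbb{P}^2(K)$ such that no point of $\mathbb{P}^2(K)$ lies on all of them. Let $r$ be the number of singular points of the arrangement, i.e., points lying on at least two of the lines. Then $r \geq s$. -/
theorem aux_finrank_inf {K : Type*} [Field K] {A B : Submodule K (Fin 3 → K)}
    (hA : Module.finrank K A = 2) (hB : Module.finrank K B = 2) (h : A ≠ B) :
    Module.finrank K (A ⊓ B : Submodule K (Fin 3 → K)) = 1 := by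
  have h1 := Submodule.finrank_sup_add_finrank_inf_eq A B
  have h2 : Module.finrank K (A ⊔ B : Submodule K (Fin 3 → K)) ≤ 3 := by
    simpa using Submodule.finrank_le (A ⊔ B)
  have h3 : Module.finrank K (A ⊓ B : Submodule K (Fin 3 → K)) < 2 := by
    by_contra hc
    have e1 : A ⊓ B = A := Submodule.eq_of_le_of_finrank_le inf_le_left (by omega)
    have e2 : A ⊓ B = B := Submodule.eq_of_le_of_finrank_le inf_le_right (by omega)
    exact h (e1.symm.trans e2)
  omega

theorem aux_unique {K : Type*} [Field K] {A B : Submodule K (Fin 3 → K)}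
    (hA : Module.finrank K A = 2) (hB : Module.finrank K B = 2) (h : A ≠ B) :
    ∃ p : Projectivization K (Fin 3 → K), p.submodule = A ⊓ B ∧
      ∀ q : Projectivization K (Fin 3 → K), q.submodule ≤ A → q.submodule ≤ B → q = p := by
  have h1 := aux_finrank_inf hA hB h
  refine ⟨Projectivization.mk'' _ h1, Projectivization.submodule_mk'' _ _, fun q qa qb => ?_⟩
  apply Projectivization.submodule_injective
  rw [Projectivization.submodule_mk'']
  refine Submodule.eq_of_le_of_finrank_le (le_inf qa qb) ?_
  rw [h1, q.finrank_submodule]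

/-- de Bruijn–Erdős: given s distinct lines in ℙ²(K)
(2-dimensional subspaces of K³) with no common point, the number r of singular
points of the arrangement (points lying on at least two of the lines) satisfies
r ≥ s. -/
theorem stmt_2 (K : Type*) [Field K] (s : ℕ)
    (L : Fin s → Submodule K (Fin 3 → K))
    (hdim : ∀ i, Module.finrank K (L i) = 2)
    (hinj : Function.Injective L)
    (hnocommon : ¬ ∃ p : Projectivization K (Fin 3 → K), ∀ i, p.submodule ≤ L i) :
    s ≤ Set.ncard {p : Projectivization K (Fin 3 → K) |
      ∃ i j, i ≠ j ∧ p.submodule ≤ L i ∧ p.submodule ≤ L j} := by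
  classical
  set S : Set (Projectivization K (Fin 3 → K)) := {p |
      ∃ i j, i ≠ j ∧ p.submodule ≤ L i ∧ p.submodule ≤ L j} with hS
  have key : ∀ i j, i ≠ j → ∃ p : Projectivization K (Fin 3 → K), p.submodule = L i ⊓ L j ∧
      ∀ q : Projectivization K (Fin 3 → K), q.submodule ≤ L i → q.submodule ≤ L j → q = p :=
    fun i j hij => aux_unique (hdim i) (hdim j) (fun h => hij (hinj h))
  choose! f hf hu using key
  have hfl : ∀ i j, i ≠ j → (f i j).submodule ≤ L i := fun i j h => (hf i j h).le.trans inf_le_left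
  have hfr : ∀ i j, i ≠ j → (f i j).submodule ≤ L j := fun i j h => (hf i j h).le.trans inf_le_right
  have hfS : ∀ i j, i ≠ j → f i j ∈ S := fun i j h => ⟨i, j, h, hfl i j h, hfr i j h⟩
  have hfin : S.Finite := by
    refine (Set.finite_range (fun x : Fin s × Fin s => f x.1 x.2)).subset ?_
    rintro p ⟨i, j, hij, h1, h2⟩
    exact ⟨(i, j), (hu i j hij p h1 h2).symm⟩
  haveI : Fintype S := hfin.fintype
  letI : Membership S (Fin s) := ⟨fun i p => p.1.submodule ≤ L i⟩
  letI : Configuration.HasPoints S (Fin s) :=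
    { exists_point := by
        intro i
        by_contra hc
        have hall : ∀ p ∈ S, p.submodule ≤ L i := by
          intro p hp
          by_contra h
          exact hc ⟨⟨p, hp⟩, h⟩
        by_cases hj : ∃ j, i ≠ j
        · obtain ⟨j, hij⟩ := hj
          refine hnocommon ⟨f i j, fun k => ?_⟩
          by_cases hjk : j = k
          · exact hjk ▸ hfr i j hij
          · have := hu i j hij (f j k) (hall _ (hfS j k hjk)) (hfl j k hjk)
            exact this ▸ hfr j k hjk
        · push Not at hj
          have hne : L i ≠ ⊥ := by
            intro h
            have := hdim i
            rw [h, finrank_bot] at this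
            omega
          obtain ⟨v, hv, hv0⟩ := Submodule.exists_mem_ne_zero_of_ne_bot hne
          refine hnocommon ⟨Projectivization.mk K v hv0, fun k => ?_⟩
          rw [← hj k, Projectivization.submodule_mk, Submodule.span_singleton_le_iff_mem]
          exact hv
      exists_line := by
        intro p
        by_contra hc
        refine hnocommon ⟨p.1, fun i => ?_⟩
        by_contra h
        exact hc ⟨i, h⟩
      eq_or_eq := by
        intro p q i j hpi hqi hpj hqj
        by_cases hij : i = j
        · exact Or.inr hij
        · exact Or.inl (Subtype.ext ((hu i j hij p.1 hpi hpj).trans (hu i j hij q.1 hqi hqj).symm))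
      mkPoint := fun {i j} h => ⟨f i j, hfS i j h⟩
      mkPoint_ax := fun {i j} h => ⟨hfl i j h, hfr i j h⟩ }
  have := Configuration.HasPoints.card_le S (Fin s)
  rw [Fintype.card_fin] at this
  rwa [← Nat.card_coe_set_eq, Nat.card_eq_fintype_card]
end

section
/- Fix integers $d \geq 2$, $m \geq 1$, $e \geq 1$. There exists a constant $M > 0$, independent of $p$, such that for every prime $p$ and every subset $F \subseteq \mathbb{Z}/p\mathbb{Z}$, the number of positive solutions $(x_1,\dots,x_d,y_1,\dots,y_m)$ of the equation $E(p)$ for which the residue class $-\,x_1^{-1} x_2 \in \mathbb{Z}/p\mathbb{Z}$ belongs to $F$ is at most $M \cdot |F| \cdot p^{\,d+m-2}$. -/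
/-- Type I/II counting estimate: for fixed d ≥ 2, m ≥ 1, e ≥ 1
there is a constant M > 0 such that for every prime p and every F ⊆ ℤ/pℤ, the
number of positive solutions (x₁,…,x_d,y₁,…,y_m) of
e(x₁+⋯+x_d) + (y₁+⋯+y_m) = p with -x₁⁻¹x₂ ∈ F is at most M·|F|·p^(d+m-2). -/
theorem stmt_4 (d m e : ℕ) (hd : 2 ≤ d) (hm : 1 ≤ m) (he : 1 ≤ e) :
    ∃ M : ℕ, 0 < M ∧ ∀ p : ℕ, p.Prime → ∀ F : Finset (ZMod p),
      Set.ncard {xy : (Fin d → ℕ) × (Fin m → ℕ) |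
        (∀ i, 0 < xy.1 i) ∧ (∀ j, 0 < xy.2 j) ∧
        e * (∑ i, xy.1 i) + (∑ j, xy.2 j) = p ∧
        -((xy.1 ⟨0, by omega⟩ : ℕ) : ZMod p)⁻¹ * ((xy.1 ⟨1, by omega⟩ : ℕ) : ZMod p) ∈ F}
      ≤ M * F.card * p ^ (d + m - 2) := by
  obtain ⟨k, rfl⟩ : ∃ k, d = k + 2 := ⟨d - 2, by omega⟩
  obtain ⟨l, rfl⟩ : ∃ l, m = l + 1 := ⟨m - 1, by omega⟩
  refine ⟨1, one_pos, fun p hp F => ?_⟩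
  have : Fact p.Prime := ⟨hp⟩
  set S := {xy : (Fin (k + 2) → ℕ) × (Fin (l + 1) → ℕ) |
        (∀ i, 0 < xy.1 i) ∧ (∀ j, 0 < xy.2 j) ∧
        e * (∑ i, xy.1 i) + (∑ j, xy.2 j) = p ∧
        -((xy.1 ⟨0, by omega⟩ : ℕ) : ZMod p)⁻¹ * ((xy.1 ⟨1, by omega⟩ : ℕ) : ZMod p) ∈ F} with hS
  let T : Finset (ZMod p × (Fin (k + 1) → ℕ) × (Fin l → ℕ)) :=
    F ×ˢ (Fintype.piFinset (fun _ : Fin (k + 1) => Finset.range p) ×ˢ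
      Fintype.piFinset (fun _ : Fin l => Finset.range p))
  have hx : ∀ xy ∈ S, ∀ i, xy.1 i < p := by
    rintro ⟨x, y⟩ ⟨h1, h2, h3, -⟩ i
    dsimp only at h1 h2 h3 ⊢
    have a1 := Finset.single_le_sum (f := x) (fun j _ => Nat.zero_le _) (Finset.mem_univ i)
    have a2 := Finset.single_le_sum (f := y) (fun j _ => Nat.zero_le _) (Finset.mem_univ 0)
    have := h2 0
    nlinarith
  have hy : ∀ xy ∈ S, ∀ i, xy.2 i < p := by
    rintro ⟨x, y⟩ ⟨h1, h2, h3, -⟩ i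
    dsimp only at h1 h2 h3 ⊢
    have a1 := Finset.single_le_sum (f := x) (fun j _ => Nat.zero_le _) (Finset.mem_univ 0)
    have a2 := Finset.single_le_sum (f := y) (fun j _ => Nat.zero_le _) (Finset.mem_univ i)
    have := h1 0
    nlinarith
  have hT : (T : Set (ZMod p × (Fin (k + 1) → ℕ) × (Fin l → ℕ))).ncard = 1 * F.card * p ^ (k + 2 + (l + 1) - 2) := by
    rw [Set.ncard_coe_finset]
    simp only [T, Finset.card_product, Fintype.card_piFinset, Finset.card_range,
      Finset.prod_const, Finset.card_univ, Fintype.card_fin, one_mul]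
    rw [← pow_add]
    congr 2
    omega
  rw [← hT]
  refine Set.ncard_le_ncard_of_injOn
    (fun xy => (-((xy.1 0 : ℕ) : ZMod p)⁻¹ * ((xy.1 1 : ℕ) : ZMod p),
      fun i => xy.1 (Fin.succAbove 1 i), fun j => xy.2 j.succ)) ?_ ?_ (Finset.finite_toSet T)
  · intro xy h
    simp only [T, Finset.coe_product, Set.mem_prod, Finset.mem_coe, Fintype.mem_piFinset,
      Finset.mem_range]
    exact ⟨h.2.2.2, fun i => hx xy h _, fun j => hy xy h _⟩
  · intro a ha b hb hab
    simp only [Prod.mk.injEq] at hab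
    obtain ⟨h1, h2, h3⟩ := hab
    have h0 : a.1 0 = b.1 0 := by
      have := congrFun h2 0
      simpa using this
    have hne : ((b.1 0 : ℕ) : ZMod p) ≠ 0 := by
      rw [Ne, ZMod.natCast_eq_zero_iff]
      exact Nat.not_dvd_of_pos_of_lt (hb.1 0) (hx b hb 0)
    have h11 : a.1 1 = b.1 1 := by
      rw [h0] at h1
      have h := mul_left_cancel₀ (neg_ne_zero.mpr (inv_ne_zero hne)) h1
      rw [ZMod.natCast_eq_natCast_iff] at h
      exact Nat.ModEq.eq_of_lt_of_lt h (hx a ha 1) (hx b hb 1)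
    have e1 : a.1 = b.1 := by
      funext i
      rcases Fin.eq_self_or_eq_succAbove 1 i with rfl | ⟨j, rfl⟩
      · exact h11
      · exact congrFun h2 j
    have e2 : a.2 = b.2 := by
      have s1 := ha.2.2.1
      have s2 := hb.2.2.1
      rw [e1, Fin.sum_univ_succ (f := a.2)] at s1
      rw [Fin.sum_univ_succ (f := b.2)] at s2
      have : ∑ j : Fin l, a.2 j.succ = ∑ j : Fin l, b.2 j.succ :=
        Finset.sum_congr rfl fun j _ => congrFun h3 j
      funext i
      refine Fin.cases ?_ (fun j => congrFun h3 j) i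
      omega
    exact Prod.ext e1 e2
end

section
/- Fix integers $d \geq 1$, $m \geq 2$, $e \geq 1$. There exists a constant $M > 0$, independent of $p$, such that for every prime $p$ and every subset $F \subseteq \mathbb{Z}/p\mathbb{Z}$, the number of positive solutions $(x_1,\dots,x_d,y_1,\dots,y_m)$ of the equation $E(p)$ for which the residue class $y_1^{-1}\,(x_1+\cdots+x_d) \in \mathbb{Z}/p\mathbb{Z}$ belongs to $F$ is at most $M \cdot |F| \cdot p^{\,d+m-2}$. -/
/-- Type III counting estimate: for fixed d ≥ 1, m ≥ 2, e ≥ 1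
there is a constant M > 0 such that for every prime p and every F ⊆ ℤ/pℤ, the
number of positive solutions (x₁,…,x_d,y₁,…,y_m) of
e(x₁+⋯+x_d) + (y₁+⋯+y_m) = p with y₁⁻¹(x₁+⋯+x_d) ∈ F is at most
M·|F|·p^(d+m-2). -/
theorem stmt_5 (d m e : ℕ) (hd : 1 ≤ d) (hm : 2 ≤ m) (he : 1 ≤ e) :
    ∃ M : ℕ, 0 < M ∧ ∀ p : ℕ, p.Prime → ∀ F : Finset (ZMod p),
      Set.ncard {xy : (Fin d → ℕ) × (Fin m → ℕ) |
        (∀ i, 0 < xy.1 i) ∧ (∀ j, 0 < xy.2 j) ∧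
        e * (∑ i, xy.1 i) + (∑ j, xy.2 j) = p ∧
        ((xy.2 ⟨0, by omega⟩ : ℕ) : ZMod p)⁻¹ * ((∑ i, xy.1 i : ℕ) : ZMod p) ∈ F}
      ≤ M * F.card * p ^ (d + m - 2) := by
  obtain ⟨a, rfl⟩ : ∃ a, d = a + 1 := ⟨d - 1, by omega⟩
  obtain ⟨b, rfl⟩ : ∃ b, m = b + 2 := ⟨m - 2, by omega⟩
  refine ⟨1, one_pos, fun p hp F => ?_⟩
  have : Fact p.Prime := ⟨hp⟩
  have : NeZero p := ⟨hp.ne_zero⟩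
  have hcast : ∀ u v : ℕ, u < p → v < p → (u : ZMod p) = (v : ZMod p) → u = v := by
    intro u v hu hv h
    have := (ZMod.natCast_eq_natCast_iff' u v p).1 h
    rwa [Nat.mod_eq_of_lt hu, Nat.mod_eq_of_lt hv] at this
  let T : Finset (ZMod p × (Fin a → ZMod p) × (Fin (b + 1) → ZMod p)) :=
    F ×ˢ (Finset.univ ×ˢ Finset.univ)
  have hT : T.card = 1 * F.card * p ^ (a + 1 + (b + 2) - 2) := by
    have : a + 1 + (b + 2) - 2 = a + (b + 1) := by omega
    rw [this]
    simp [T, Finset.card_product, ZMod.card, pow_add]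
  rw [← hT, ← Set.ncard_coe_finset]
  have hbound : ∀ x : Fin (a + 1) → ℕ, ∀ y : Fin (b + 2) → ℕ, (∀ j, 0 < y j) →
      e * (∑ i, x i) + (∑ j, y j) = p →
      (∑ i, x i) < p ∧ (∀ i, x i < p) ∧ (∀ j : Fin (b + 1), y j.castSucc < p) := by
    intro x y hy h
    have h1 : (∑ i, x i) ≤ e * (∑ i, x i) := Nat.le_mul_of_pos_left _ he
    have h2 : (∑ j, y j) = (∑ j : Fin (b + 1), y j.castSucc) + y (Fin.last _) :=
      Fin.sum_univ_castSucc y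
    have h3 := hy (Fin.last _)
    refine ⟨by omega, fun i => ?_, fun j => ?_⟩
    · have := Finset.single_le_sum (f := x) (fun i _ => Nat.zero_le _) (Finset.mem_univ i)
      omega
    · have := Finset.single_le_sum (f := fun j : Fin (b + 1) => y j.castSucc)
        (fun i _ => Nat.zero_le _) (Finset.mem_univ j)
      omega
  refine Set.ncard_le_ncard_of_injOn
    (fun xy => (((xy.2 ⟨0, by omega⟩ : ℕ) : ZMod p)⁻¹ * ((∑ i, xy.1 i : ℕ) : ZMod p),
      (fun i => ((xy.1 i.succ : ℕ) : ZMod p)), (fun j => ((xy.2 j.castSucc : ℕ) : ZMod p))))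
    ?_ ?_ (Finset.finite_toSet T)
  · rintro ⟨x, y⟩ ⟨_, _, _, h⟩
    simpa [T] using h
  · rintro ⟨x, y⟩ ⟨hx, hy, h, -⟩ ⟨x', y'⟩ ⟨hx', hy', h', -⟩ heq
    simp only [Prod.mk.injEq] at heq hx hy h hx' hy' h'
    obtain ⟨q1, q2, q3⟩ := heq
    obtain ⟨b1, b2, b3⟩ := hbound x y hy h
    obtain ⟨c1, c2, c3⟩ := hbound x' y' hy' h'
    have r2 : ∀ i : Fin a, x i.succ = x' i.succ := fun i =>
      hcast _ _ (b2 _) (c2 _) (congrFun q2 i)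
    have r3 : ∀ j : Fin (b + 1), y j.castSucc = y' j.castSucc := fun j =>
      hcast _ _ (b3 _) (c3 _) (congrFun q3 j)
    have r0 : y ⟨0, by omega⟩ = y' ⟨0, by omega⟩ := r3 0
    have hne : ((y' ⟨0, by omega⟩ : ℕ) : ZMod p) ≠ 0 := by
      intro h0
      have h5 := hcast _ 0 (c3 0) hp.pos (by simpa using h0)
      have := hy' (Fin.castSucc 0)
      omega
    rw [r0] at q1
    have rX : ∑ i, x i = ∑ i, x' i :=
      hcast _ _ b1 c1 (mul_left_cancel₀ (inv_ne_zero hne) q1)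
    have rY : ∑ j, y j = ∑ j, y' j := by
      rw [rX] at h
      omega
    have ex : x = x' := by
      rw [Fin.sum_univ_succ x, Fin.sum_univ_succ x', Finset.sum_congr rfl (fun i _ => r2 i)] at rX
      funext i
      refine Fin.cases ?_ r2 i
      omega
    have ey : y = y' := by
      rw [Fin.sum_univ_castSucc y, Fin.sum_univ_castSucc y',
        Finset.sum_congr rfl (fun i _ => r3 i)] at rY
      funext j
      refine Fin.lastCases ?_ r3 j
      omega
    rw [ex, ey]
end

section
/- Fix integers $d \geq 1$, $m \geq 2$, $e \geq 1$, indices $1 \leq \alpha \leq \beta \leq d$, an integer $n$ with $0 \leq n < e$, integers $n_i$ with $0 < n_i < e$ for $\alpha < i \leq \beta$, and $\varsigma \in \{0,1\}$, subject to the condition that $\beta > \alpha$ or $\varsigma = 1$. For a positive solution $(x_1,\dots,x_d,y_1,\dots,y_m)$ of $E(p)$ set $z = \sum_{i=\alpha+1}^{\beta} n_i x_i + \varsigma\, y_1$, $\nu_a = n\sum_{i=1}^{\alpha} x_i + z$, and $\nu_b = \sum_{i=1}^{\alpha} x_i + \nu_a$ (so that $0 < \nu_a < p$). Then there exists a constant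 $M > 0$, independent of $p$, such that for every prime $p$ and every subset $F \subseteq \mathbb{Z}/p\mathbb{Z}$, the number of positive solutions of $E(p)$ for which the residue class $-\,\nu_a^{-1}\nu_b \in \mathbb{Z}/p\mathbb{Z}$ belongs to $F$ is at most $M \cdot |F| \cdot p^{\,d+m-2}$. -/
/-- The sum x₁ + ⋯ + x_α of the first α coordinates of a (1-based) tuple
(x₁,…,x_d) represented by a function `Fin d → ℕ`. -/
def firstSum (d α : ℕ) (x : Fin d → ℕ) : ℕ :=
  ∑ i ∈ Finset.univ.filter (fun i : Fin d => (i : ℕ) + 1 ≤ α), x i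

/-- The quantity z = ∑_{i=α+1}^{β} nᵢ xᵢ + ς y₁ of the Type V estimate. -/
def zPart (d α β ς : ℕ) (nc : ℕ → ℕ) (x : Fin d → ℕ) (y₁ : ℕ) : ℕ :=
  (∑ i ∈ Finset.univ.filter (fun i : Fin d => α < (i : ℕ) + 1 ∧ (i : ℕ) + 1 ≤ β),
    nc ((i : ℕ) + 1) * x i) + ς * y₁

/-- Coordinates of a pair of tuples, as a function on the sum type. -/
def coordV {d m : ℕ} (xy : (Fin d → ℕ) × (Fin m → ℕ)) : Fin d ⊕ Fin m → ℕ := Sum.elim xy.1 xy.2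

lemma count_aux (d m p a : ℕ) (hp : p.Prime) (F : Finset (ZMod p))
    (A : Set ((Fin d → ℕ) × (Fin m → ℕ)))
    (S N : (Fin d → ℕ) × (Fin m → ℕ) → ℕ)
    (w l : Fin d ⊕ Fin m) (hwl : w ≠ l)
    (hlt : ∀ u ∈ A, ∀ i, coordV u i < p)
    (hl : ∀ u ∈ A, ∀ v ∈ A, (∀ i, i ≠ l → coordV u i = coordV v i) → coordV u l = coordV v l)
    (ha : ∀ u ∈ A, 0 < a ∧ a < p)
    (hS : ∀ u ∈ A, 0 < S u ∧ S u < p)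
    (hN : ∀ u ∈ A, 0 < N u ∧ N u < p)
    (hSS : ∀ u v, (∀ i, i ≠ w → i ≠ l → coordV u i = coordV v i) → S u = S v)
    (hNN : ∀ u v, (∀ i, i ≠ w → i ≠ l → coordV u i = coordV v i) →
      N u + a * coordV v w = N v + a * coordV u w)
    (hF : ∀ u ∈ A, -((N u : ℕ) : ZMod p)⁻¹ * ((S u + N u : ℕ) : ZMod p) ∈ F) :
    A.ncard ≤ F.card * p ^ (d + m - 2) := by
  classical
  have : Fact p.Prime := ⟨hp⟩
  let J := {i : Fin d ⊕ Fin m // i ∉ ({w, l} : Finset (Fin d ⊕ Fin m))}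
  have hJ : Fintype.card J = d + m - 2 := by
    rw [show Fintype.card J = Fintype.card (Fin d ⊕ Fin m) - Fintype.card
      {i : Fin d ⊕ Fin m // i ∈ ({w, l} : Finset (Fin d ⊕ Fin m))} from
      Fintype.card_subtype_compl _]
    rw [Fintype.card_coe, Finset.card_pair hwl]
    simp
  let T : Finset (ZMod p × (J → ℕ)) := F ×ˢ Fintype.piFinset (fun _ : J => Finset.range p)
  have hT : T.card = F.card * p ^ (d + m - 2) := by
    simp [T, Finset.card_product, Fintype.card_piFinset, hJ]
  have hnz : ∀ k : ℕ, 0 < k → k < p → ((k : ℕ) : ZMod p) ≠ 0 := by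
    intro k h0 h1 h
    rw [ZMod.natCast_eq_zero_iff] at h
    exact absurd (Nat.le_of_dvd h0 h) (by omega)
  rw [← hT, ← Set.ncard_coe_finset]
  refine Set.ncard_le_ncard_of_injOn
    (fun u => (-((N u : ℕ) : ZMod p)⁻¹ * ((S u + N u : ℕ) : ZMod p), fun j : J => coordV u j.1))
    ?_ ?_ T.finite_toSet
  · intro u hu
    simp only [T, Finset.coe_product, Set.mem_prod, Finset.mem_coe, Fintype.mem_piFinset,
      Finset.mem_range]
    exact ⟨hF u hu, fun j => hlt u hu _⟩
  · intro u hu v hv huv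
    simp only [Prod.mk.injEq] at huv
    obtain ⟨h1, h2⟩ := huv
    have hag : ∀ i, i ≠ w → i ≠ l → coordV u i = coordV v i := by
      intro i hi hi'
      exact congrFun h2 ⟨i, by simp [hi, hi']⟩
    have hs := hSS u v hag
    have hn := hNN u v hag
    have hNu := hnz _ (hN u hu).1 (hN u hu).2
    have hNv := hnz _ (hN v hv).1 (hN v hv).2
    have hSu := hnz _ (hS u hu).1 (hS u hu).2
    have haz := hnz _ (ha u hu).1 (ha u hu).2
    have hn' : (N u : ZMod p) + a * (coordV v w : ZMod p) = N v + a * (coordV u w : ZMod p) := by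
      exact_mod_cast congrArg (Nat.cast : ℕ → ZMod p) hn
    rw [← hs] at h1
    push_cast at h1
    have h3 : (S u : ZMod p) * ((N u : ZMod p) - N v) = 0 := by
      field_simp at h1
      linear_combination h1
    have h4 : (N u : ZMod p) = N v := by
      rcases mul_eq_zero.1 h3 with h | h
      · exact absurd h hSu
      · exact sub_eq_zero.1 h
    have h5 : (coordV v w : ZMod p) = coordV u w := by
      rw [h4] at hn'
      exact mul_left_cancel₀ haz (add_left_cancel hn')
    have h6 : coordV u w = coordV v w := by
      have := congrArg ZMod.val h5
      rw [ZMod.val_cast_of_lt (hlt v hv w), ZMod.val_cast_of_lt (hlt u hu w)] at this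
      exact this.symm
    have h7 : ∀ i, i ≠ l → coordV u i = coordV v i := by
      intro i hi
      by_cases hiw : i = w
      · rw [hiw, h6]
      · exact hag i hiw hi
    have h8 : ∀ i, coordV u i = coordV v i := by
      intro i
      by_cases hi : i = l
      · rw [hi]; exact hl u hu v hv h7
      · exact h7 i hi
    exact Prod.ext (funext fun i => h8 (Sum.inl i)) (funext fun i => h8 (Sum.inr i))

/-- Type V counting estimate: fix d ≥ 1, m ≥ 2, e ≥ 1, indices
1 ≤ α ≤ β ≤ d, 0 ≤ n < e, integers nᵢ with 0 < nᵢ < e for α < i ≤ β, and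
ς ∈ {0,1}, with β > α or ς = 1.  For a positive solution of
e(x₁+⋯+x_d) + (y₁+⋯+y_m) = p set z = ∑_{i=α+1}^{β} nᵢ xᵢ + ς y₁,
ν_a = n(x₁+⋯+x_α) + z and ν_b = (x₁+⋯+x_α) + ν_a.  Then there is M > 0,
independent of p, such that for every prime p and every F ⊆ ℤ/pℤ the number of
positive solutions with -ν_a⁻¹ ν_b ∈ F is at most M·|F|·p^(d+m-2). -/
theorem stmt_6 (d m e α β n ς : ℕ) (nc : ℕ → ℕ)
    (hd : 1 ≤ d) (hm : 2 ≤ m) (he : 1 ≤ e)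
    (hα : 1 ≤ α) (hαβ : α ≤ β) (hβ : β ≤ d)
    (hn : n < e)
    (hnc : ∀ i, α < i → i ≤ β → 0 < nc i ∧ nc i < e)
    (hς : ς = 0 ∨ ς = 1)
    (hcond : α < β ∨ ς = 1) :
    ∃ M : ℕ, 0 < M ∧ ∀ p : ℕ, p.Prime → ∀ F : Finset (ZMod p),
      Set.ncard {xy : (Fin d → ℕ) × (Fin m → ℕ) |
        (∀ i, 0 < xy.1 i) ∧ (∀ j, 0 < xy.2 j) ∧
        e * (∑ i, xy.1 i) + (∑ j, xy.2 j) = p ∧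
        -(((n * firstSum d α xy.1 + zPart d α β ς nc xy.1 (xy.2 ⟨0, by omega⟩) : ℕ) : ZMod p))⁻¹
          * (((firstSum d α xy.1 +
              (n * firstSum d α xy.1 + zPart d α β ς nc xy.1 (xy.2 ⟨0, by omega⟩)) : ℕ) : ZMod p))
          ∈ F}
      ≤ M * F.card * p ^ (d + m - 2) := by
  classical
  let z0 : Fin m := ⟨0, by omega⟩
  let l0 : Fin m := ⟨m - 1, by omega⟩
  have hz0l : z0 ≠ l0 := by
    intro h
    have := congrArg Fin.val h
    simp only [z0, l0] at this
    omega
  -- choice of the distinguished coordinate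
  have key : ∃ (w : Fin d ⊕ Fin m) (a : ℕ), w ≠ Sum.inr l0 ∧ 0 < a ∧ a ≤ e ∧
      (∀ i : Fin d, (i : ℕ) + 1 ≤ α → Sum.inl i ≠ w) ∧
      (∀ u v : (Fin d → ℕ) × (Fin m → ℕ),
        (∀ i, i ≠ w → i ≠ Sum.inr l0 → coordV u i = coordV v i) →
        zPart d α β ς nc u.1 (u.2 z0) + a * coordV v w =
          zPart d α β ς nc v.1 (v.2 z0) + a * coordV u w) := by
    by_cases hab : α < β
    · let i0 : Fin d := ⟨α, by omega⟩
      refine ⟨Sum.inl i0, nc (α + 1), by simp, (hnc _ (by omega) (by omega)).1,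
        (hnc _ (by omega) (by omega)).2.le, ?_, ?_⟩
      · intro i hi h
        have := congrArg Fin.val (Sum.inl.inj h)
        simp only [i0] at this
        omega
      · intro u v h
        have hy : u.2 z0 = v.2 z0 := h (Sum.inr z0) (by simp) (by simpa using hz0l)
        have hmem : i0 ∈ Finset.univ.filter
            (fun i : Fin d => α < (i : ℕ) + 1 ∧ (i : ℕ) + 1 ≤ β) := by
          simp only [Finset.mem_filter, Finset.mem_univ, true_and, i0]
          omega
        unfold zPart
        rw [← Finset.add_sum_erase _ _ hmem, ← Finset.add_sum_erase _ _ hmem, hy]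
        rw [Finset.sum_congr rfl (g := fun i : Fin d => nc ((i : ℕ) + 1) * v.1 i)]
        · simp only [coordV, Sum.elim_inl, i0]
          ring
        · intro i hi
          have hi' : u.1 i = v.1 i :=
            h (Sum.inl i) (by simpa using (Finset.mem_erase.1 hi).1) (by simp)
          rw [hi']
    · have hς1 : ς = 1 := by omega
      refine ⟨Sum.inr z0, 1, by simpa using hz0l, by norm_num, he, by simp, ?_⟩
      intro u v h
      have hx : u.1 = v.1 := funext fun i => h (Sum.inl i) (by simp) (by simp)
      unfold zPart
      rw [hx, hς1]
      simp only [coordV, Sum.elim_inr]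
      ring
  obtain ⟨w, a, hwl, ha0, hae, hwS, hZ⟩ := key
  refine ⟨1, one_pos, fun p hp F => ?_⟩
  rw [one_mul]
  have hSS : ∀ u v : (Fin d → ℕ) × (Fin m → ℕ),
      (∀ i, i ≠ w → i ≠ Sum.inr l0 → coordV u i = coordV v i) →
      firstSum d α u.1 = firstSum d α v.1 := by
    intro u v h
    unfold firstSum
    refine Finset.sum_congr rfl fun i hi => ?_
    exact h (Sum.inl i) (hwS i (Finset.mem_filter.1 hi).2) (by simp)
  refine count_aux d m p a hp F _ (fun u => firstSum d α u.1)
    (fun u => n * firstSum d α u.1 + zPart d α β ς nc u.1 (u.2 z0)) w (Sum.inr l0) hwl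
    ?_ ?_ ?_ ?_ ?_ hSS ?_ ?_
  · rintro u ⟨hx, hy, hsum, -⟩ i
    have hyp : u.2 l0 ≤ ∑ j, u.2 j := Finset.single_le_sum (fun _ _ => Nat.zero_le _) (Finset.mem_univ _)
    have hl0 := hy l0
    have hX : ∑ i, u.1 i ≤ e * ∑ i, u.1 i := Nat.le_mul_of_pos_left _ he
    rcases i with i | j
    · have : u.1 i ≤ ∑ i, u.1 i :=
        Finset.single_le_sum (fun _ _ => Nat.zero_le _) (Finset.mem_univ _)
      simp only [coordV, Sum.elim_inl]
      omega
    · have h1 : u.2 j ≤ ∑ j, u.2 j :=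
        Finset.single_le_sum (fun _ _ => Nat.zero_le _) (Finset.mem_univ _)
      have h2 : u.1 ⟨0, by omega⟩ ≤ ∑ i, u.1 i :=
        Finset.single_le_sum (fun _ _ => Nat.zero_le _) (Finset.mem_univ _)
      have h3 := hx ⟨0, by omega⟩
      simp only [coordV, Sum.elim_inr]
      omega
  · rintro u ⟨-, -, hu, -⟩ v ⟨-, -, hv, -⟩ h
    have hx : u.1 = v.1 := funext fun i => h (Sum.inl i) (by simp)
    have h1 := Finset.add_sum_erase Finset.univ u.2 (Finset.mem_univ l0)
    have h2 := Finset.add_sum_erase Finset.univ v.2 (Finset.mem_univ l0)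
    have h3 : ∑ j ∈ Finset.univ.erase l0, u.2 j = ∑ j ∈ Finset.univ.erase l0, v.2 j := by
      refine Finset.sum_congr rfl fun j hj => ?_
      exact h (Sum.inr j) (by simpa using (Finset.mem_erase.1 hj).1)
    rw [hx] at hu
    simp only [coordV, Sum.elim_inr]
    omega
  · rintro u ⟨hx, hy, hsum, -⟩
    refine ⟨ha0, ?_⟩
    have hyp : u.2 l0 ≤ ∑ j, u.2 j :=
      Finset.single_le_sum (fun _ _ => Nat.zero_le _) (Finset.mem_univ _)
    have hl0 := hy l0
    have h2 : u.1 ⟨0, by omega⟩ ≤ ∑ i, u.1 i :=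
      Finset.single_le_sum (fun _ _ => Nat.zero_le _) (Finset.mem_univ _)
    have h3 := hx ⟨0, by omega⟩
    have : e ≤ e * ∑ i, u.1 i := Nat.le_mul_of_pos_right _ (by omega)
    omega
  · rintro u ⟨hx, hy, hsum, -⟩
    have hyp : u.2 l0 ≤ ∑ j, u.2 j :=
      Finset.single_le_sum (fun _ _ => Nat.zero_le _) (Finset.mem_univ _)
    have hl0 := hy l0
    have hX : ∑ i, u.1 i ≤ e * ∑ i, u.1 i := Nat.le_mul_of_pos_left _ he
    have h1 : firstSum d α u.1 ≤ ∑ i, u.1 i :=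
      Finset.sum_le_sum_of_subset (Finset.filter_subset _ _)
    refine ⟨?_, by omega⟩
    refine Finset.sum_pos (fun i _ => hx i) ⟨⟨0, by omega⟩, ?_⟩
    simp only [Finset.mem_filter, Finset.mem_univ, true_and]
    omega
  · rintro u ⟨hx, hy, hsum, -⟩
    have hl0 := hy l0
    have hy01 : u.2 z0 + u.2 l0 ≤ ∑ j, u.2 j := by
      rw [← Finset.sum_pair hz0l]
      exact Finset.sum_le_sum_of_subset (Finset.subset_univ _)
    constructor
    · refine Nat.add_pos_right _ ?_
      unfold zPart
      rcases hcond with hab | h1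
      · refine Nat.add_pos_left (Finset.sum_pos (fun i hi => ?_) ⟨⟨α, by omega⟩, ?_⟩) _
        · have hi' := (Finset.mem_filter.1 hi).2
          exact Nat.mul_pos (hnc _ hi'.1 hi'.2).1 (hx i)
        · simp only [Finset.mem_filter, Finset.mem_univ, true_and]
          omega
      · refine Nat.add_pos_right _ ?_
        rw [h1, one_mul]
        exact hy z0
    · have hςy : ς * u.2 z0 ≤ u.2 z0 := by
        rcases hς with h | h <;> simp [h]
      have h1 : n * firstSum d α u.1 ≤ e * firstSum d α u.1 := Nat.mul_le_mul_right _ hn.le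
      have h2 : ∑ i ∈ Finset.univ.filter (fun i : Fin d => α < (i : ℕ) + 1 ∧ (i : ℕ) + 1 ≤ β),
          nc ((i : ℕ) + 1) * u.1 i ≤
          e * ∑ i ∈ Finset.univ.filter (fun i : Fin d => ¬ ((i : ℕ) + 1 ≤ α)), u.1 i := by
        rw [Finset.mul_sum]
        calc _ ≤ ∑ i ∈ Finset.univ.filter (fun i : Fin d => α < (i : ℕ) + 1 ∧ (i : ℕ) + 1 ≤ β),
              e * u.1 i := by
              refine Finset.sum_le_sum fun i hi => ?_
              have hi' := (Finset.mem_filter.1 hi).2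
              exact Nat.mul_le_mul_right _ (hnc _ hi'.1 hi'.2).2.le
          _ ≤ _ := by
              refine Finset.sum_le_sum_of_subset fun i hi => ?_
              simp only [Finset.mem_filter, Finset.mem_univ, true_and] at hi ⊢
              omega
      have h3 := Finset.sum_filter_add_sum_filter_not Finset.univ
        (fun i : Fin d => (i : ℕ) + 1 ≤ α) u.1
      have h4 : e * firstSum d α u.1 +
          e * ∑ i ∈ Finset.univ.filter (fun i : Fin d => ¬ ((i : ℕ) + 1 ≤ α)), u.1 i =
          e * ∑ i, u.1 i := by
        rw [← mul_add, ← h3, firstSum]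
      simp only [zPart]
      omega
  · intro u v h
    have h1 := hSS u v h
    have h2 := hZ u v h
    simp only [h1]
    omega
  · rintro u ⟨-, -, -, hF⟩
    exact hF
end

section
/- Let $d \geq 3$, $g \geq 0$, $e \geq 1$, $\delta \geq 3$, $\tau$, and $\epsilon$ be integers with $\tau \geq e(d-1)+1$ and $1 \leq \epsilon \leq \delta - 2$, and let $k_1,\dots,k_\epsilon$ and $k_1^o,\dots,k_\epsilon^o$ be integers with $k_j \geq 2$, $k_j^o \geq 1$, and $k_j^o + 2k_j \leq 2d+1$ for all $j$. Then $(d-1)(2\delta + 4(g-1) - e) + \tau - \sum_{j=1}^{\epsilon} k_j^o - 2\sum_{j=1}^{\epsilon} k_j + 4\epsilon \;\geq\; \delta - 1 \;\geq\; 2$. -/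
/-- numerical content of c̄₁²(𝒜_{pΔ}) ≥ 2 in Corollary 6.2. -/
theorem stmt_10 (d g e τ δ : ℤ) (ε : ℕ) (k ko : Fin ε → ℤ)
    (hd : 3 ≤ d) (hg : 0 ≤ g) (he : 1 ≤ e) (hδ : 3 ≤ δ)
    (hτ : e * (d - 1) + 1 ≤ τ)
    (hε1 : 1 ≤ ε) (hε2 : (ε : ℤ) ≤ δ - 2)
    (hk : ∀ j, 2 ≤ k j) (hko : ∀ j, 1 ≤ ko j)
    (hkko : ∀ j, ko j + 2 * k j ≤ 2 * d + 1) :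
    δ - 1 ≤ (d - 1) * (2 * δ + 4 * (g - 1) - e) + τ
      - (∑ j, ko j) - 2 * (∑ j, k j) + 4 * ε ∧
    2 ≤ δ - 1 := by
  refine ⟨?_, by linarith⟩
  have hsum : (∑ j, ko j) + 2 * (∑ j, k j) ≤ ε * (2 * d + 1) := by
    rw [Finset.mul_sum, ← Finset.sum_add_distrib]
    calc ∑ j, (ko j + 2 * k j) ≤ ∑ _j : Fin ε, (2 * d + 1) :=
          Finset.sum_le_sum fun j _ => hkko j
      _ = ε * (2 * d + 1) := by simp
  have h1 : 0 ≤ (δ - 2 - ε) * (2 * d - 3) :=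
    mul_nonneg (by linarith) (by linarith)
  have h2 : 0 ≤ (d - 1) * g := mul_nonneg (by linarith) hg
  linarith
end

section
/- Let $\zeta = e^{2\pi i/3} \in \mathbb{C}$, and consider the nine lines of the dual Hesse arrangement in $\mathbb{P}^2(\mathbb{C})$, namely the zero loci of the linear forms $x_1 - \zeta^k x_2$, $x_1 - \zeta^k x_3$, and $x_2 - \zeta^k x_3$ for $k = 0,1,2$ (the nine linear factors of $(x_1^3 - x_2^3)(x_1^3 - x_3^3)(x_2^3 - x_3^3)$). Then a point of $\mathbb{P}^2(\mathbb{C})$ lies on at least two of these nine lines if and only if it is one of the twelve points $[1:\zeta:\zeta]$, $[\zeta:\zeta^2:1]$, $[1:\zeta:1]$, $[\zeta:1:\zeta^2]$, $[\zeta:1:1]$, $[1:\zeta^2:1]$, $[1:1:\zeta]$, $[1:1:\zeta^2]$, $[1:1:1]$, $[0:1:0]$, $[1:0:0]$, $[0:0:1]$; moreover, each of these twelve points lies on exactly three of the nine lines. -/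
/-- ζ = e^{2πi/3}, a primitive cube root of unity. -/
noncomputable def hesseZeta : ℂ := Complex.exp (2 * Real.pi * Complex.I / 3)

/-- Coefficient vectors of the nine lines of the dual Hesse arrangement: the
linear forms x₁ - ζᵏ x₂, x₁ - ζᵏ x₃ and x₂ - ζᵏ x₃ for k = 0,1,2, i.e. the nine
linear factors of (x₁³-x₂³)(x₁³-x₃³)(x₂³-x₃³). -/
noncomputable def hesseLine : Fin 9 → Fin 3 → ℂ :=
  ![![1, -1, 0], ![1, -hesseZeta, 0], ![1, -hesseZeta ^ 2, 0],
    ![1, 0, -1], ![1, 0, -hesseZeta], ![1, 0, -hesseZeta ^ 2],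
    ![0, 1, -1], ![0, 1, -hesseZeta], ![0, 1, -hesseZeta ^ 2]]

/-- A point of ℙ²(ℂ) lies on the i-th line of the dual Hesse arrangement if the
corresponding linear form vanishes on a (equivalently, any) representative. -/
def hesseOnLine (i : Fin 9) (p : Projectivization ℂ (Fin 3 → ℂ)) : Prop :=
  ∑ k, hesseLine i k * p.rep k = 0

/-- Homogeneous coordinates of the twelve triple points of the dual Hesse
arrangement. -/
noncomputable def hessePtVec : Fin 12 → Fin 3 → ℂ :=
  ![![1, hesseZeta, hesseZeta], ![hesseZeta, hesseZeta ^ 2, 1], ![1, hesseZeta, 1],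
    ![hesseZeta, 1, hesseZeta ^ 2], ![hesseZeta, 1, 1], ![1, hesseZeta ^ 2, 1],
    ![1, 1, hesseZeta], ![1, 1, hesseZeta ^ 2], ![1, 1, 1],
    ![0, 1, 0], ![1, 0, 0], ![0, 0, 1]]

lemma hessePtVec_ne_zero (j : Fin 12) : hessePtVec j ≠ 0 := by
  fin_cases j
  exacts [fun h => one_ne_zero (congrFun h 0),
          fun h => one_ne_zero (congrFun h 2),
          fun h => one_ne_zero (congrFun h 0),
          fun h => one_ne_zero (congrFun h 1),
          fun h => one_ne_zero (congrFun h 1),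
          fun h => one_ne_zero (congrFun h 0),
          fun h => one_ne_zero (congrFun h 0),
          fun h => one_ne_zero (congrFun h 0),
          fun h => one_ne_zero (congrFun h 0),
          fun h => one_ne_zero (congrFun h 1),
          fun h => one_ne_zero (congrFun h 0),
          fun h => one_ne_zero (congrFun h 2)]

/-- The twelve triple points of the dual Hesse arrangement, as points of
ℙ²(ℂ): [1:ζ:ζ], [ζ:ζ²:1], [1:ζ:1], [ζ:1:ζ²], [ζ:1:1], [1:ζ²:1], [1:1:ζ],
[1:1:ζ²], [1:1:1], [0:1:0], [1:0:0], [0:0:1]. -/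
noncomputable def hessePt (j : Fin 12) : Projectivization ℂ (Fin 3 → ℂ) :=
  Projectivization.mk ℂ (hessePtVec j) (hessePtVec_ne_zero j)


lemma hz_sum : hesseZeta ^ 2 + hesseZeta + 1 = 0 := by
  have h : IsPrimitiveRoot hesseZeta 3 := by
    have := Complex.isPrimitiveRoot_exp 3 (by norm_num)
    simpa [hesseZeta] using this
  have h1 : hesseZeta ≠ 1 := h.ne_one (by norm_num)
  have h3 : hesseZeta ^ 3 = 1 := h.pow_eq_one
  have : (hesseZeta - 1) * (hesseZeta ^ 2 + hesseZeta + 1) = 0 := by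
    linear_combination h3
  exact (mul_eq_zero.mp this).resolve_left (sub_ne_zero.mpr h1)

lemma hz_ne_one : hesseZeta ≠ 1 := by
  intro h
  have := hz_sum
  rw [h] at this
  norm_num at this

lemma hz_cube {x y : ℂ} (h : x ^ 3 = y ^ 3) :
    x = y ∨ x = hesseZeta * y ∨ x = hesseZeta ^ 2 * y := by
  have hz := hz_sum
  have : (x - y) * ((x - hesseZeta * y) * (x - hesseZeta ^ 2 * y)) = 0 := by
    grind
  rcases mul_eq_zero.mp this with h | h
  · exact Or.inl (sub_eq_zero.mp h)
  rcases mul_eq_zero.mp h with h | h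
  · exact Or.inr (Or.inl (sub_eq_zero.mp h))
  · exact Or.inr (Or.inr (sub_eq_zero.mp h))

lemma onLine_mk (i : Fin 9) (v : Fin 3 → ℂ) (hv : v ≠ 0) :
    hesseOnLine i (Projectivization.mk ℂ v hv) ↔ ∑ k, hesseLine i k * v k = 0 := by
  obtain ⟨a, ha⟩ := Projectivization.exists_smul_eq_mk_rep ℂ v hv
  unfold hesseOnLine
  rw [← ha]
  have : ∑ k, hesseLine i k * (a • v) k = (a : ℂ) * ∑ k, hesseLine i k * v k := by
    rw [Finset.mul_sum]
    refine Finset.sum_congr rfl fun k _ => ?_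
    simp only [Pi.smul_apply, Units.smul_def, smul_eq_mul]
    ring
  rw [this, mul_eq_zero]
  simp

/-- The three lines through each of the twelve points. -/
def hesseTable : Fin 12 → Finset (Fin 9) :=
  ![{2, 5, 6}, {2, 4, 8}, {2, 3, 7}, {1, 5, 7}, {1, 4, 6}, {1, 3, 8},
    {0, 5, 8}, {0, 4, 7}, {0, 3, 6}, {3, 4, 5}, {6, 7, 8}, {0, 1, 2}]

lemma onLine_pt (j : Fin 12) (i : Fin 9) :
    hesseOnLine i (hessePt j) ↔ i ∈ hesseTable j := by
  have hz := hz_sum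
  have h1 := hz_ne_one
  unfold hessePt
  rw [onLine_mk]
  fin_cases j <;> fin_cases i <;>
    simp [hesseLine, hessePtVec, hesseTable, Fin.sum_univ_three] <;> grind

lemma two_lines {x y z : ℂ} {i j : Fin 9} (hij : i ≠ j)
    (hi : ∑ k, hesseLine i k * ![x, y, z] k = 0)
    (hj : ∑ k, hesseLine j k * ![x, y, z] k = 0) :
    (x = 0 ∧ y = 0) ∨ (x = 0 ∧ z = 0) ∨ (y = 0 ∧ z = 0) ∨ (y ^ 3 = x ^ 3 ∧ z ^ 3 = x ^ 3) := by
  have hz := hz_sum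
  have h1 := hz_ne_one
  fin_cases i <;> fin_cases j <;>
    simp [hesseLine, Fin.sum_univ_three] at hij hi hj <;> grind

lemma eq_pt {v : Fin 3 → ℂ} (hv : v ≠ 0) (j : Fin 12) (a : ℂ) (h : a • hessePtVec j = v) :
    ∃ j : Fin 12, Projectivization.mk ℂ v hv = hessePt j :=
  ⟨j, (Projectivization.mk_eq_mk_iff' ℂ _ _ _ _).mpr ⟨a, h⟩⟩

lemma vec_pt {x y z : ℂ} (hv : ![x, y, z] ≠ 0)
    (h : (x = 0 ∧ y = 0) ∨ (x = 0 ∧ z = 0) ∨ (y = 0 ∧ z = 0) ∨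
      (y ^ 3 = x ^ 3 ∧ z ^ 3 = x ^ 3)) :
    ∃ j : Fin 12, Projectivization.mk ℂ ![x, y, z] hv = hessePt j := by
  have hz := hz_sum
  rcases h with ⟨rfl, rfl⟩ | ⟨rfl, rfl⟩ | ⟨rfl, rfl⟩ | ⟨hy, hz'⟩
  · exact eq_pt hv 11 z (by ext k; fin_cases k <;> simp [hessePtVec])
  · exact eq_pt hv 9 y (by ext k; fin_cases k <;> simp [hessePtVec])
  · exact eq_pt hv 10 x (by ext k; fin_cases k <;> simp [hessePtVec])
  rcases hz_cube hy with rfl | rfl | rfl <;> rcases hz_cube hz' with h | h | h <;> subst h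
  · exact eq_pt hv 8 z (by ext k; fin_cases k <;> simp [hessePtVec])
  · exact eq_pt hv 6 y (by ext k; fin_cases k <;> simp [hessePtVec] <;> grind)
  · exact eq_pt hv 7 y (by ext k; fin_cases k <;> simp [hessePtVec] <;> grind)
  · exact eq_pt hv 2 z (by ext k; fin_cases k <;> simp [hessePtVec] <;> grind)
  · exact eq_pt hv 0 x (by ext k; fin_cases k <;> simp [hessePtVec] <;> grind)
  · exact eq_pt hv 1 (hesseZeta ^ 2 * x)
      (by ext k; fin_cases k <;> simp [hessePtVec] <;> grind)
  · exact eq_pt hv 5 z (by ext k; fin_cases k <;> simp [hessePtVec] <;> grind)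
  · exact eq_pt hv 3 (hesseZeta ^ 2 * x)
      (by ext k; fin_cases k <;> simp [hessePtVec] <;> grind)
  · exact eq_pt hv 4 (hesseZeta ^ 2 * x)
      (by ext k; fin_cases k <;> simp [hessePtVec] <;> grind)

/-- a point of ℙ²(ℂ) lies on at least two of the nine lines of
the dual Hesse arrangement if and only if it is one of the twelve listed
points; moreover each of these twelve points lies on exactly three of the nine
lines. -/
theorem stmt_11 :
    (∀ p : Projectivization ℂ (Fin 3 → ℂ),
      (∃ i j : Fin 9, i ≠ j ∧ hesseOnLine i p ∧ hesseOnLine j p) ↔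
        ∃ j : Fin 12, p = hessePt j) ∧
    (∀ j : Fin 12, Set.ncard {i : Fin 9 | hesseOnLine i (hessePt j)} = 3) := by
  refine ⟨fun p => ⟨?_, ?_⟩, fun j => ?_⟩
  · rintro ⟨i, j, hij, hi, hj⟩
    induction p using Projectivization.ind with
    | h v hv =>
      rw [onLine_mk] at hi hj
      obtain ⟨x, y, z, rfl⟩ : ∃ x y z, v = ![x, y, z] :=
        ⟨v 0, v 1, v 2, by ext k; fin_cases k <;> rfl⟩
      exact vec_pt hv (two_lines hij hi hj)
  · rintro ⟨j, rfl⟩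
    simp only [onLine_pt]
    revert j
    decide
  · have : {i : Fin 9 | hesseOnLine i (hessePt j)} = (hesseTable j : Set (Fin 9)) := by
      ext i
      simp [onLine_pt]
    rw [this, Set.ncard_coe_finset]
    clear this
    revert j
    decide
end

section
/- Let $\zeta = e^{2\pi i/3} \in \mathbb{C}$ and let $q(x_1,x_2,x_3) = \zeta^2 x_1 x_2 + \zeta x_1 x_3 + x_2 x_3$. Then $q$ vanishes at the five points $[0:0:1]$, $[1:0:0]$, $[0:1:0]$, $[1:1:1]$, $[\zeta:1:\zeta^2]$ of $\mathbb{P}^2(\mathbb{C})$, and every homogeneous polynomial of degree $2$ in $\mathbb{C}[x_1,x_2,x_3]$ vanishing at all five of these points is a scalar multiple of $q$. In particular, $q = 0$ is the unique conic through these five points. -/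
open MvPolynomial

/-- ζ = e^{2πi/3}, a primitive cube root of unity. -/
noncomputable def hesseZeta' : ℂ := Complex.exp (2 * Real.pi * Complex.I / 3)

/-- The quadratic form q(x₁,x₂,x₃) = ζ² x₁x₂ + ζ x₁x₃ + x₂x₃ of Example 5.1. -/
noncomputable def hesseConic : MvPolynomial (Fin 3) ℂ :=
  C (hesseZeta' ^ 2) * X 0 * X 1 + C hesseZeta' * X 0 * X 2 + X 1 * X 2

/-- Homogeneous coordinates of the five points [0:0:1], [1:0:0], [0:1:0],
[1:1:1], [ζ:1:ζ²]. -/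
noncomputable def fivePts : Fin 5 → Fin 3 → ℂ :=
  ![![0, 0, 1], ![1, 0, 0], ![0, 1, 0], ![1, 1, 1], ![hesseZeta', 1, hesseZeta' ^ 2]]

theorem hesse_zeta_sum : hesseZeta' ^ 2 + hesseZeta' + 1 = 0 ∧ hesseZeta' - 1 ≠ 0 := by
  have h := Complex.isPrimitiveRoot_exp 3 (by norm_num)
  have e : Complex.exp (2 * Real.pi * Complex.I / (3 : ℕ)) = hesseZeta' := by
    simp [hesseZeta']
  rw [e] at h
  have h1 : hesseZeta' - 1 ≠ 0 := sub_ne_zero.mpr (h.ne_one (by norm_num))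
  refine ⟨?_, h1⟩
  have h3 := h.pow_eq_one
  apply mul_left_cancel₀ h1
  linear_combination h3

/-- The exponent vector `(a, b, c)`. -/
noncomputable def expo (a b c : ℕ) : Fin 3 →₀ ℕ := Finsupp.equivFunOnFinite.symm ![a, b, c]

theorem expo_inj (a b c a' b' c' : ℕ) :
    expo a b c = expo a' b' c' ↔ (a = a' ∧ b = b' ∧ c = c') := by
  simp [expo]

theorem monomial_expo (a b c : ℕ) (r : ℂ) :
    monomial (expo a b c) r = C r * (X 0 ^ a * X 1 ^ b * X 2 ^ c) := by
  rw [monomial_eq, Finsupp.prod_fintype _ _ (by simp)]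
  simp [expo, Fin.prod_univ_three]

theorem quadric_form (f : MvPolynomial (Fin 3) ℂ) (hf : f.IsHomogeneous 2) :
    ∃ u v w a b c : ℂ, f = C u * X 0 ^ 2 + C v * X 1 ^ 2 + C w * X 2 ^ 2
      + C a * (X 0 * X 1) + C b * (X 0 * X 2) + C c * (X 1 * X 2) := by
  have key : f = monomial (expo 2 0 0) (coeff (expo 2 0 0) f)
      + monomial (expo 0 2 0) (coeff (expo 0 2 0) f)
      + monomial (expo 0 0 2) (coeff (expo 0 0 2) f)
      + monomial (expo 1 1 0) (coeff (expo 1 1 0) f)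
      + monomial (expo 1 0 1) (coeff (expo 1 0 1) f)
      + monomial (expo 0 1 1) (coeff (expo 0 1 1) f) := by
    ext d
    have hd : d = expo (d 0) (d 1) (d 2) := by
      ext i; fin_cases i <;> simp [expo]
    have hdeg : d.degree = d 0 + d 1 + d 2 := by
      rw [Finsupp.degree_eq_sum, Fin.sum_univ_three]
    generalize d 0 = x at *
    generalize d 1 = y at *
    generalize d 2 = z at *
    by_cases h : x + y + z = 2
    · have hx : x ≤ 2 := by omega
      have hy : y ≤ 2 := by omega
      have hz : z = 2 - x - y := by omega
      subst hz
      subst hd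
      interval_cases x <;> interval_cases y <;>
        first | omega | simp [coeff_monomial, expo_inj]
    · rw [hf.coeff_eq_zero (by omega)]
      subst hd
      simp only [coeff_add, coeff_monomial, expo_inj]
      repeat rw [if_neg (by omega)]
      simp
  refine ⟨coeff (expo 2 0 0) f, coeff (expo 0 2 0) f, coeff (expo 0 0 2) f,
    coeff (expo 1 1 0) f, coeff (expo 1 0 1) f, coeff (expo 0 1 1) f, key.trans ?_⟩
  simp only [monomial_expo]
  simp only [pow_zero, pow_one, mul_one, one_mul]

/-- q = ζ²x₁x₂ + ζx₁x₃ + x₂x₃ vanishes at the five points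
[0:0:1], [1:0:0], [0:1:0], [1:1:1], [ζ:1:ζ²] of ℙ²(ℂ), and every homogeneous
polynomial of degree 2 in ℂ[x₁,x₂,x₃] vanishing at all five of these points is
a scalar multiple of q; in particular q = 0 is the unique conic through these
five points. -/
theorem stmt_12 :
    (∀ j : Fin 5, eval (fivePts j) hesseConic = 0) ∧
    (∀ f : MvPolynomial (Fin 3) ℂ, f.IsHomogeneous 2 →
      (∀ j : Fin 5, eval (fivePts j) f = 0) → ∃ c : ℂ, f = c • hesseConic) := by
  obtain ⟨hz, h1⟩ := hesse_zeta_sum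
  constructor
  · intro j
    fin_cases j <;> simp [fivePts, hesseConic]
    · linear_combination hz
    · linear_combination (hesseZeta' ^ 2 - hesseZeta' + 1) * hz - (1 - hesseZeta') * hz
  · intro f hf hv
    obtain ⟨u, v, w, a, b, c, rfl⟩ := quadric_form f hf
    have e0 := hv 0
    have e1 := hv 1
    have e2 := hv 2
    have e3 := hv 3
    have e4 := hv 4
    simp [fivePts] at e0 e1 e2 e3 e4
    subst e0 e1 e2
    have hb : b = c * hesseZeta' := by
      apply mul_left_cancel₀ h1
      simp at e3 e4
      linear_combination hesseZeta' * e3 - e4 + b * (hesseZeta' - 1) * hz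
    have ha : a = c * hesseZeta' ^ 2 := by
      simp at e3
      linear_combination e3 - hb - c * hz
    refine ⟨c, ?_⟩
    rw [ha, hb, hesseConic, smul_eq_C_mul]
    simp only [C_mul, C_pow, C_0]
    ring
end
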